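/- arXiv:1506.07147 — 3 statements merged into one kernel-verified Lean document; each statement's English description precedes it below -/
import Mathlib

section
/- Let R be a semilocal Dedekind domain (a Dedekind domain with only finitely many maximal ideals) in which 2 is invertible, and let F be its field of fractions. Let G and G' be symmetric n×n matrices over R such that det G and det G' are squarefree elements of R (the corresponding quadratic forms have simple degeneration of multiplicity one). If there exists P ∈ GL_n(F) with Pᵀ·G·P = G', then there exists Q ∈ GL_n(R) with Qᵀ·G·Q = G'. -/
open Matrix

namespace SqfreeQF

/-- Congruence of Gram matrices through an invertible matrix. -/
def Cg {S ι κ : Type*} [CommRing S] [Fintype ι] [Fintype κ] [DecidableEq ι] [DecidableEq κ]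
    (A : Matrix ι ι S) (B : Matrix κ κ S) : Prop :=
  ∃ (P : Matrix ι κ S) (P' : Matrix κ ι S), P * P' = 1 ∧ P' * P = 1 ∧ Pᵀ * A * P = B

section
variable {S T ι κ l : Type*} [CommRing S] [CommRing T] [Fintype ι] [Fintype κ] [Fintype l]
  [DecidableEq ι] [DecidableEq κ] [DecidableEq l]

theorem Cg.symm {A : Matrix ι ι S} {B : Matrix κ κ S} (h : Cg A B) : Cg B A := by
  obtain ⟨P, P', h1, h2, rfl⟩ := h
  refine ⟨P', P, h2, h1, ?_⟩
  have h3 : P'ᵀ * Pᵀ = 1 := by rw [← transpose_mul, h1, transpose_one]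
  calc P'ᵀ * (Pᵀ * A * P) * P' = (P'ᵀ * Pᵀ) * A * (P * P') := by simp only [Matrix.mul_assoc]
    _ = A := by rw [h3, h1]; simp

theorem Cg.trans {A : Matrix ι ι S} {B : Matrix κ κ S} {C : Matrix l l S}
    (h : Cg A B) (h' : Cg B C) : Cg A C := by
  obtain ⟨P, P', h1, h2, rfl⟩ := h
  obtain ⟨Q, Q', h3, h4, rfl⟩ := h'
  refine ⟨P * Q, Q' * P', ?_, ?_, ?_⟩
  · calc P * Q * (Q' * P') = P * (Q * Q') * P' := by simp only [Matrix.mul_assoc]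
      _ = 1 := by rw [h3]; simpa using h1
  · calc Q' * P' * (P * Q) = Q' * (P' * P) * Q := by simp only [Matrix.mul_assoc]
      _ = 1 := by rw [h2]; simpa using h4
  · simp only [transpose_mul, Matrix.mul_assoc]

theorem Cg.map (f : S →+* T) {A : Matrix ι ι S} {B : Matrix κ κ S} (h : Cg A B) :
    Cg (A.map f) (B.map f) := by
  obtain ⟨P, P', h1, h2, rfl⟩ := h
  refine ⟨P.map f, P'.map f, ?_, ?_, ?_⟩
  · rw [← Matrix.map_mul, h1]; simp
  · rw [← Matrix.map_mul, h2]; simp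
  · simp [Matrix.map_mul, transpose_map]

theorem Cg.isSymm {A : Matrix ι ι S} {B : Matrix κ κ S} (h : Cg A B) (hA : A.IsSymm) :
    B.IsSymm := by
  obtain ⟨P, P', h1, h2, rfl⟩ := h
  unfold Matrix.IsSymm
  simp only [transpose_mul, transpose_transpose, hA.eq, Matrix.mul_assoc]

theorem Cg.squarefree {A : Matrix ι ι S} {B : Matrix κ κ S} (h : Cg A B) (e : ι ≃ κ)
    (hA : Squarefree A.det) : Squarefree B.det := by
  obtain ⟨P, P', h1, h2, rfl⟩ := h
  have h3 : P.submatrix id e * P'.submatrix e id = 1 := by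
    rw [Matrix.submatrix_mul_equiv, h1]; simp
  have hu : IsUnit (P.submatrix id e).det := by
    have := congrArg Matrix.det h3
    rw [det_mul, det_one] at this
    exact IsUnit.of_mul_eq_one _ this
  have h4 : (Pᵀ * A * P).det = (P.submatrix id e).det * (P.submatrix id e).det * A.det := by
    rw [← Matrix.det_submatrix_equiv_self e]
    have : (Pᵀ * A * P).submatrix e e = (P.submatrix id e)ᵀ * A * (P.submatrix id e) := by
      ext i j
      simp [Matrix.mul_apply]
    rw [this, det_mul, det_mul, det_transpose]; ring
  rw [h4]
  intro x hx
  apply hA x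
  exact ((hu.mul hu).dvd_mul_left).1 hx

theorem Cg.fromBlocks {u : Matrix ι ι S} {A : Matrix κ κ S} {B : Matrix l l S}
    (h : Cg A B) : Cg (Matrix.fromBlocks u 0 0 A) (Matrix.fromBlocks u 0 0 B) := by
  obtain ⟨P, P', h1, h2, rfl⟩ := h
  refine ⟨Matrix.fromBlocks 1 0 0 P, Matrix.fromBlocks 1 0 0 P', ?_, ?_, ?_⟩ <;>
  simp [fromBlocks_multiply, fromBlocks_transpose, h1, h2]

end

/-- Witt cancellation of a one dimensional form over a field. -/
theorem witt {K ι : Type*} [Field K] (h2 : (2 : K) ≠ 0) [Fintype ι] [DecidableEq ι]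
    (u : K) (M M' : Matrix ι ι K) (hM : M.IsSymm) (hM' : M'.det ≠ 0)
    (h : Cg (fromBlocks (u • (1 : Matrix Unit Unit K)) 0 0 M) (fromBlocks (u • (1 : Matrix Unit Unit K)) 0 0 M')) :
    Cg M M' := by
  obtain ⟨P, -, -, -, hP⟩ := h
  rw [← fromBlocks_toBlocks P] at hP
  set a := P.toBlocks₁₁
  set r := P.toBlocks₁₂
  set c := P.toBlocks₂₁
  set D := P.toBlocks₂₂
  rw [fromBlocks_transpose, fromBlocks_multiply, fromBlocks_multiply, fromBlocks_inj] at hP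
  obtain ⟨e1, e2, e3, e4⟩ := hP
  simp only [Matrix.mul_zero, add_zero, zero_add] at e1 e2 e3 e4
  set α := a () () with hα
  -- scalar forms
  have hau : ∀ X : Matrix Unit ι K, aᵀ * (u • (1 : Matrix Unit Unit K)) * X = (α * u) • X := by
    intro X; ext i j
    have : a PUnit.unit i = a () () := rfl
    simp [Matrix.mul_apply, hα, this, mul_comm u]
  have hru : rᵀ * (u • (1 : Matrix Unit Unit K)) * r = u • (rᵀ * r) := by
    ext i j; simp [Matrix.mul_apply]; ring
  have hcc : cᵀ * M * c = (u - α * u * α) • (1 : Matrix Unit Unit K) := by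
    ext i j
    have := congrFun (congrFun e1 i) j
    simp only [Matrix.add_apply] at this
    rw [Matrix.smul_apply, Subsingleton.elim i j, Matrix.one_apply_eq]
    rw [Subsingleton.elim i j] at this
    have h5 : (aᵀ * (u • (1 : Matrix Unit Unit K)) * a) j j = α * u * α := by
      have : a PUnit.unit j = a () () := rfl
      simp [Matrix.mul_apply, hα, this, mul_comm u]
    rw [h5] at this
    rw [Matrix.smul_apply, Matrix.one_apply_eq] at this
    simp only [smul_eq_mul, mul_one] at this ⊢
    linear_combination this
  rw [hau] at e2
  rw [hru] at e4
  have hcD : cᵀ * M * D = -((α * u) • r) := by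
    rw [eq_neg_iff_add_eq_zero, add_comm]; exact e2
  have hDc : Dᵀ * M * c = -((α * u) • rᵀ) := by
    have := congrArg transpose hcD
    simpa [transpose_mul, hM.eq, Matrix.mul_assoc] using this
  have hDD : Dᵀ * M * D = M' - u • (rᵀ * r) := by
    rw [eq_sub_iff_add_eq, add_comm]; exact e4
  obtain ⟨s, hs, hs0⟩ : ∃ s : K, s * s = 1 ∧ α + s ≠ 0 := by
    by_cases h : α + 1 = 0
    · refine ⟨-1, by ring, fun h' => h2 ?_⟩
      linear_combination h - h'
    · exact ⟨1, by ring, h⟩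
  set k := (α + s)⁻¹ with hk
  have hk1 : k * (α + s) = 1 := inv_mul_cancel₀ hs0
  have key : (D - k • (c * r))ᵀ * M * (D - k • (c * r)) = M' := by
    have : (D - k • (c * r))ᵀ * M * (D - k • (c * r)) =
        Dᵀ * M * D - k • (Dᵀ * M * c * r) - k • (rᵀ * (cᵀ * M * D))
          + (k * k) • (rᵀ * (cᵀ * M * c) * r) := by
      simp only [transpose_sub, transpose_smul, transpose_mul, Matrix.sub_mul, Matrix.mul_sub,
        Matrix.smul_mul, Matrix.mul_smul, Matrix.mul_assoc, smul_sub, smul_smul]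
      abel
    rw [this, hDD, hDc, hcD, hcc]
    simp only [Matrix.neg_mul, Matrix.mul_neg, Matrix.smul_mul, Matrix.mul_smul, Matrix.mul_one,
      smul_neg, smul_smul]
    have h0 : -u + k * (α * u) + k * (α * u) + k * k * (u - α * u * α) = 0 := by
      have : k * k * (α + s) * (α + s) = 1 := by
        linear_combination (k * (α + s) + 1) * hk1
      linear_combination u * this + (-u * k * k) * hs - 2 * u * k * α * hk1
    have h1 : M' - u • (rᵀ * r) - -((k * (α * u)) • (rᵀ * r)) - -((k * (α * u)) • (rᵀ * r)) +
        (k * k * (u - α * u * α)) • (rᵀ * r) =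
        M' + (-u + k * (α * u) + k * (α * u) + k * k * (u - α * u * α)) • (rᵀ * r) := by
      module
    rw [h1, h0]; simp
  have hdet : IsUnit (D - k • (c * r)).det := by
    rw [isUnit_iff_ne_zero]
    intro h0
    apply hM'
    rw [← key, det_mul, h0, mul_zero]
  exact ⟨_, _, Matrix.mul_nonsing_inv _ hdet, Matrix.nonsing_inv_mul _ hdet, key⟩

section
variable {R : Type*} [CommRing R]

/-- Chinese remainder for vectors. -/
theorem crt (hs : {I : Ideal R | I.IsMaximal}.Finite) {ι : Type*} (f : Ideal R → ι → R) :
    ∃ x : ι → R, ∀ I : Ideal R, I.IsMaximal → ∀ i, x i - f I i ∈ I := by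
  have : Finite {I : Ideal R | I.IsMaximal} := hs
  have hc : Pairwise fun i j : {I : Ideal R | I.IsMaximal} => IsCoprime i.1 j.1 := by
    intro i j hij
    have := i.2
    have := j.2
    exact Ideal.isCoprime_iff_sup_eq.2
      (Ideal.IsMaximal.coprime_of_ne i.2 j.2 (fun h => hij (Subtype.ext h)))
  have := fun i : ι => Ideal.exists_forall_sub_mem_ideal hc (fun I => f I.1 i)
  choose x hx using this
  exact ⟨x, fun I hI i => hx i ⟨I, hI⟩⟩

theorem dot_mem {ι : Type*} [Fintype ι] (I : Ideal R) (G : Matrix ι ι R) (x x' y y' : ι → R)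
    (h : ∀ i, x i - x' i ∈ I) (h' : ∀ i, y i - y' i ∈ I) :
    x ⬝ᵥ G *ᵥ y - x' ⬝ᵥ G *ᵥ y' ∈ I := by
  have : x ⬝ᵥ G *ᵥ y - x' ⬝ᵥ G *ᵥ y' = (x - x') ⬝ᵥ G *ᵥ y + x' ⬝ᵥ G *ᵥ (y - y') := by
    simp [sub_dotProduct, mulVec_sub, dotProduct_sub]
  rw [this]
  refine I.add_mem (I.sum_mem fun i _ => I.mul_mem_right _ (h i))
    (I.sum_mem fun i _ => I.mul_mem_left _ (I.sum_mem fun j _ => I.mul_mem_left _ (h' j)))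

theorem dot_comm {ι : Type*} [Fintype ι] {G : Matrix ι ι R} (hG : G.IsSymm) (x y : ι → R) :
    x ⬝ᵥ G *ᵥ y = y ⬝ᵥ G *ᵥ x := by
  rw [dotProduct_mulVec, ← mulVec_transpose, hG.eq, dotProduct_comm]

theorem map_form {T ι : Type*} [CommRing T] [Fintype ι] (f : R →+* T) (G : Matrix ι ι R)
    (x : ι → R) : f (x ⬝ᵥ G *ᵥ x) = (f ∘ x) ⬝ᵥ G.map f *ᵥ (f ∘ x) := by
  simp [dotProduct, mulVec, map_sum]

theorem unit_of_maximal {a : R} (h : ∀ I : Ideal R, I.IsMaximal → a ∉ I) : IsUnit a := by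
  by_contra hn
  obtain ⟨I, hI, ha⟩ := exists_max_ideal_of_mem_nonunits hn
  exact h I hI ha

/-- A row and a column divisible by `π`, meeting in an entry divisible by `π²`. -/
theorem sq_dvd_det {ι : Type*} [Fintype ι] [DecidableEq ι] (A : Matrix ι ι R) (π : R) (i : ι)
    (hr : ∀ j, π ∣ A i j) (hc : ∀ j, π ∣ A j i) (hd : π * π ∣ A i i) : π * π ∣ A.det := by
  choose r hr using hr
  obtain ⟨t, ht⟩ := hd
  -- adjust the row so that its diagonal entry is divisible
  have h1 : A = A.updateRow i (π • Function.update r i (π * t)) := by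
    ext a b
    by_cases ha : a = i
    · subst ha
      by_cases hb : b = a
      · subst hb; simp [ht, mul_assoc]
      · simp [hb, hr]
    · simp [ha]
  rw [h1, det_updateRow_smul]
  apply mul_dvd_mul_left
  set A1 := A.updateRow i (Function.update r i (π * t))
  have h2 : ∀ j, π ∣ A1 j i := by
    intro j
    by_cases hj : j = i
    · subst hj; simp [A1]
    · simpa [A1, hj] using hc j
  choose c hc' using h2
  have h3 : A1 = A1.updateCol i (π • c) := by
    ext a b
    by_cases hb : b = i
    · subst hb; simp [hc']
    · simp [hb]
  rw [h3, det_updateCol_smul]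
  exact dvd_mul_right _ _

end

section
variable {R : Type*} [CommRing R] [IsDomain R]

/-- In simple degeneration, a vector in the radical modulo `π` of norm divisible by `π²`
vanishes modulo `π`. -/
theorem dvd_of_radical {ι : Type*} [Fintype ι] [DecidableEq ι] {G : Matrix ι ι R} (hG : G.IsSymm)
    (hd : Squarefree G.det) {π : R} (hπ : Prime π) (y : ι → R)
    (h1 : ∀ i, π ∣ (G *ᵥ y) i) (h2 : π * π ∣ y ⬝ᵥ G *ᵥ y) (i : ι) : π ∣ y i := by
  by_contra hi
  set U := (1 : Matrix ι ι R).updateCol i y with hU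
  have hUdet : U.det = y i := by
    rw [hU, ← cramer_apply, cramer_one]; rfl
  have hUi : U *ᵥ Pi.single i 1 = y := by
    ext a; simp [hU]
  have hA : ∀ j, (Uᵀ * G * U) j i = (Uᵀ *ᵥ (G *ᵥ y)) j := by
    intro j
    rw [← hUi, mulVec_mulVec, mulVec_mulVec]; simp [Matrix.mul_assoc]
  have hs : (Uᵀ * G * U).IsSymm := by
    unfold Matrix.IsSymm
    simp only [transpose_mul, transpose_transpose, hG.eq, Matrix.mul_assoc]
  have hc : ∀ j, π ∣ (Uᵀ * G * U) j i := by
    intro j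
    rw [hA]
    exact Finset.dvd_sum fun k _ => (h1 k).mul_left _
  have hii : (Uᵀ * G * U) i i = y ⬝ᵥ G *ᵥ y := by
    rw [hA]
    simp [mulVec, hU, dotProduct]
  have := sq_dvd_det (Uᵀ * G * U) π i (fun j => by rw [hs.apply j i]; exact hc j) hc
    (by rw [hii]; exact h2)
  rw [det_mul, det_mul, det_transpose, hUdet] at this
  have h5 : π ^ 2 ∣ (y i * y i) * G.det := by
    rw [pow_two]; convert this using 1; ring
  have h6 := hπ.pow_dvd_of_dvd_mul_left 2 (fun h => hi ((hπ.dvd_or_dvd h).elim id id)) h5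
  rw [pow_two] at h6
  exact hπ.not_isUnit (hd π h6)

variable [IsPrincipalIdealRing R]

/-- Values represented over the fraction field. -/
theorem represent (hsl : {I : Ideal R | I.IsMaximal}.Finite) (h2 : IsUnit (2 : R))
    {ι : Type*} [Fintype ι] [DecidableEq ι] {G : Matrix ι ι R} (hG : G.IsSymm)
    (hd : Squarefree G.det) {u : R} (hu : IsUnit u) (y : ι → R) (d : R) (hd0 : d ≠ 0)
    (hy : y ⬝ᵥ G *ᵥ y = u * d ^ 2)
    (hprim : ∀ π : R, Prime π → π ∣ d → ∃ i, ¬ π ∣ y i) :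
    ∃ x : ι → R, x ⬝ᵥ G *ᵥ x = u := by
  classical
  have hloc : ∀ I : Ideal R, I.IsMaximal → d ∈ I → ∃ v : ι → R, v ⬝ᵥ G *ᵥ y ∉ I := by
    intro I hI hdI
    by_contra! hcon'
    have hcon : ∀ i, (G *ᵥ y) i ∈ I := by
      intro i
      simpa using hcon' (Pi.single i 1)
    clear hcon'
    obtain ⟨π, rfl⟩ := (IsPrincipalIdealRing.principal I).principal
    simp only [Ideal.submodule_span_eq, Ideal.mem_span_singleton] at *
    have hπ0 : π ≠ 0 := by rintro rfl; exact hd0 (zero_dvd_iff.1 hdI)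
    have hπ : Prime π := (Ideal.span_singleton_prime hπ0).1 hI.isPrime
    obtain ⟨i, hi⟩ := hprim π hπ hdI
    exact hi (dvd_of_radical hG hd hπ y hcon
      (by rw [hy, pow_two]; exact (mul_dvd_mul hdI hdI).mul_left _) i)
  choose! j hj using hloc
  obtain ⟨z, hz⟩ := crt hsl (fun I => if d ∈ I then j I else (0 : ι → R))
  set b := y ⬝ᵥ G *ᵥ z with hb
  set c := z ⬝ᵥ G *ᵥ z with hc
  have hE : IsUnit ((u + c) * d - 2 * b) := by
    apply unit_of_maximal
    intro I hI hmem
    by_cases hdI : d ∈ I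
    · have h3 := hz I hI
      simp only [hdI, if_true] at h3
      have h4 := dot_mem I G z _ y y h3 (by simp)
      rw [← dot_comm hG y z, ← hb] at h4
      have h5 : 2 * b ∈ I := by
        have := I.sub_mem (I.mul_mem_left (u + c) hdI) hmem
        simpa using this
      rcases hI.isPrime.mem_or_mem h5 with h | h
      · exact hI.ne_top (I.eq_top_of_isUnit_mem h h2)
      · apply hj I hI hdI
        have := I.sub_mem h h4
        simpa using this
    · have h3 := hz I hI
      simp only [hdI, if_false] at h3
      have h4 := dot_mem I G z _ y y h3 (by simp)
      have h5 := dot_mem I G z _ z z h3 (by simp)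
      rw [zero_dotProduct, sub_zero] at h4 h5
      rw [← dot_comm hG, ← hb] at h4
      rw [← hc] at h5
      have h6 : u * d ∈ I := by
        have := I.add_mem (I.sub_mem hmem (I.mul_mem_left d h5)) (I.mul_mem_left 2 h4)
        convert this using 1; ring
      rcases hI.isPrime.mem_or_mem h6 with h | h
      · exact hI.ne_top (I.eq_top_of_isUnit_mem h hu)
      · exact hdI h
  obtain ⟨e, he⟩ := hE.exists_left_inv
  refine ⟨(1 - e * (c - u) * d) • z + (e * (c - u)) • y, ?_⟩
  simp only [mulVec_add, mulVec_smul, dotProduct_add, add_dotProduct, smul_dotProduct,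
    dotProduct_smul, smul_eq_mul]
  rw [dot_comm hG z y, ← hb, ← hc, hy]
  set E := (u + c) * d - 2 * b with hEd
  have hE2 : E * E ≠ 0 := (hE.mul hE).ne_zero
  apply mul_left_cancel₀ hE2
  have e1 : E * (1 - e * (c - u) * d) = 2 * (u * d - b) := by
    linear_combination (-(c - u) * d) * he + hEd
  have e2 : E * (e * (c - u)) = c - u := by linear_combination (c - u) * he
  generalize (1 - e * (c - u) * d) = α at *
  generalize e * (c - u) = β at *
  have : E * E * (α * (α * c) + α * (β * b) + (β * (α * b) + β * (β * (u * d ^ 2)))) =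
    (E * α) ^ 2 * c + 2 * (E * α) * (E * β) * b + (E * β) ^ 2 * (u * d ^ 2) := by ring
  rw [e1, e2] at this
  have h9 : E * E * u = ((u + c) * d - 2 * b) ^ 2 * u := by rw [hEd]; ring
  linear_combination this - h9

/-- Unit values exist in rank at least two. -/
theorem exists_unit_value (hsl : {I : Ideal R | I.IsMaximal}.Finite) (h2 : IsUnit (2 : R))
    {m : ℕ} {G : Matrix (Fin (m + 2)) (Fin (m + 2)) R} (hG : G.IsSymm)
    (hd : Squarefree G.det) : ∃ x, IsUnit (x ⬝ᵥ G *ᵥ x) := by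
  have hloc : ∀ I : Ideal R, I.IsMaximal → ∃ v, v ⬝ᵥ G *ᵥ v ∉ I := by
    intro I hI
    by_contra! hcon
    have hij : ∀ i j, G i j ∈ I := by
      intro i j
      have h1 := hcon (Pi.single i 1 + Pi.single j 1)
      have h3 := hcon (Pi.single i 1)
      have h4 := hcon (Pi.single j 1)
      have h5 : 2 * G i j ∈ I := by
        have := I.sub_mem (I.sub_mem h1 h3) h4
        convert this using 1
        simp only [mulVec_add, dotProduct_add, add_dotProduct]
        rw [dot_comm hG (Pi.single j 1) (Pi.single i 1)]
        have : (Pi.single i 1 : Fin (m + 2) → R) ⬝ᵥ G *ᵥ Pi.single j 1 = G i j := by simp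
        rw [this]; ring
      rcases hI.isPrime.mem_or_mem h5 with h | h
      · exact absurd (I.eq_top_of_isUnit_mem h h2) hI.ne_top
      · exact h
    obtain ⟨π, rfl⟩ := (IsPrincipalIdealRing.principal I).principal
    simp only [Ideal.submodule_span_eq, Ideal.mem_span_singleton] at *
    have hu : IsUnit π := by
      apply hd
      choose H hH using hij
      have : G = π • (Matrix.of H) := by ext i j; simp [hH]
      rw [this, det_smul, Fintype.card_fin, pow_add, pow_two]
      exact ⟨π ^ m * (Matrix.of H).det, by ring⟩
    exact hI.ne_top (Ideal.span_singleton_eq_top.2 hu)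
  choose! v hv using hloc
  obtain ⟨x, hx⟩ := crt hsl v
  refine ⟨x, unit_of_maximal fun I hI hmem => hv I hI ?_⟩
  have := I.sub_mem hmem (dot_mem I G x _ x _ (hx I hI) (hx I hI))
  simpa using this

/-- Splitting off a vector of unit norm. -/
theorem split {m : ℕ} {G : Matrix (Fin (m + 1)) (Fin (m + 1)) R} (hG : G.IsSymm)
    (x : Fin (m + 1) → R) {u : R} (hx : x ⬝ᵥ G *ᵥ x = u) (hu : IsUnit u) :
    ∃ M : Matrix (Fin m) (Fin m) R, Cg G (Matrix.fromBlocks (u • (1 : Matrix Unit Unit R)) 0 0 M) := by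
  classical
  let φ : (Fin (m + 1) → R) →ₗ[R] R := (dotProductBilin R R x) ∘ₗ G.mulVecLin
  have hφ : ∀ v, φ v = x ⬝ᵥ G *ᵥ v := fun v => rfl
  obtain ⟨k, bN⟩ := Submodule.basisOfPid (Pi.basisFun R (Fin (m + 1))) (LinearMap.ker φ)
  let f : (R × LinearMap.ker φ) →ₗ[R] (Fin (m + 1) → R) :=
    LinearMap.coprod (LinearMap.toSpanSingleton R _ x) (LinearMap.ker φ).subtype
  have hf : ∀ c n, f (c, n) = c • x + n := fun c n => by simp [f]
  obtain ⟨e, he⟩ := hu.exists_left_inv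
  have hbij : Function.Bijective f := by
    constructor
    · rw [← LinearMap.ker_eq_bot, LinearMap.ker_eq_bot']
      rintro ⟨c, n⟩ h
      rw [hf] at h
      have h1 := congrArg φ h
      rw [map_add, map_smul, hφ x, hx, n.2, map_zero, add_zero, smul_eq_mul] at h1
      have hc : c = 0 := by linear_combination e * h1 - c * he
      subst hc
      simpa using h
    · intro v
      refine ⟨(e * φ v, ⟨v - (e * φ v) • x, ?_⟩), ?_⟩
      · rw [LinearMap.mem_ker, map_sub, map_smul, hφ x, hx, smul_eq_mul]
        linear_combination (-φ v) * he
      · rw [hf]; simp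
  let b := ((Module.Basis.singleton Unit R).prod bN).map (LinearEquiv.ofBijective f hbij)
  have hk : k = m := by
    have h1 := Module.finrank_eq_card_basis b
    simp at h1
    omega
  subst hk
  have hb0 : b (Sum.inl ()) = x := by simp [b, hf]
  have hb1 : ∀ i, b (Sum.inr i) = bN i := by intro i; simp [b, hf]
  set P := (Pi.basisFun R (Fin (k + 1))).toMatrix b with hP
  have hent : ∀ i j, (Pᵀ * G * P) i j = b i ⬝ᵥ G *ᵥ b j := by
    intro i j
    rw [Matrix.mul_assoc, Matrix.mul_apply]
    simp [dotProduct, mulVec, Matrix.mul_apply, hP, Module.Basis.toMatrix_apply]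
  refine ⟨(Pᵀ * G * P).toBlocks₂₂, P, b.toMatrix (Pi.basisFun R (Fin (k + 1))),
    Module.Basis.toMatrix_mul_toMatrix_flip _ _, Module.Basis.toMatrix_mul_toMatrix_flip _ _, ?_⟩
  have hz : ∀ i, x ⬝ᵥ G *ᵥ (bN i : Fin (k + 1) → R) = 0 := fun i => (bN i).2
  ext i j
  rcases i with i | i <;> rcases j with j | j
  · rw [hent, hb0, hx]; simp
  · rw [hent, hb0, hb1, hz]; simp
  · rw [hent, hb0, hb1, dot_comm hG, hz]; simp
  · simp [toBlocks₂₂]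

/-- Values represented over the fraction field, second form. -/
theorem represent' {F : Type*} [Field F] [Algebra R F] [IsFractionRing R F]
    (hsl : {I : Ideal R | I.IsMaximal}.Finite) (h2 : IsUnit (2 : R))
    {ι : Type*} [Fintype ι] [DecidableEq ι] {G : Matrix ι ι R} (hG : G.IsSymm)
    (hd : Squarefree G.det) {u : R} (hu : IsUnit u) (w : ι → F)
    (hw : w ⬝ᵥ G.map (algebraMap R F) *ᵥ w = algebraMap R F u) :
    ∃ x : ι → R, x ⬝ᵥ G *ᵥ x = u := by
  let J : Ideal R :=
    { carrier := {d | ∃ y : ι → R, ∀ i, algebraMap R F (y i) = algebraMap R F d * w i}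
      add_mem' := by
        rintro a b ⟨y, hy⟩ ⟨z, hz⟩
        exact ⟨y + z, fun i => by simp [hy, hz, add_mul]⟩
      zero_mem' := ⟨0, by simp⟩
      smul_mem' := by
        rintro c a ⟨y, hy⟩
        exact ⟨c • y, fun i => by simp [hy, mul_assoc]⟩ }
  have hJ : ∀ d, d ∈ J ↔ ∃ y : ι → R, ∀ i, algebraMap R F (y i) = algebraMap R F d * w i :=
    fun d => Iff.rfl
  obtain ⟨d, hdJ⟩ := (IsPrincipalIdealRing.principal J).principal
  rw [Ideal.submodule_span_eq] at hdJ
  have hinj := IsFractionRing.injective R F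
  have hd0 : d ≠ 0 := by
    rintro rfl
    obtain ⟨b, hb⟩ := IsLocalization.exist_integer_multiples_of_finite (nonZeroDivisors R) w
    choose y hy using hb
    have : (b : R) ∈ J := (hJ _).2 ⟨y, fun i => by rw [hy i, Algebra.smul_def]⟩
    rw [hdJ, Ideal.mem_span_singleton, zero_dvd_iff] at this
    exact nonZeroDivisors.coe_ne_zero b this
  obtain ⟨y, hy⟩ := (hJ d).1 (by rw [hdJ]; exact Ideal.mem_span_singleton_self d)
  have hyw : (algebraMap R F) ∘ y = algebraMap R F d • w := by
    ext i; simp [hy]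
  refine represent hsl h2 hG hd hu y d hd0 ?_ ?_
  · apply hinj
    rw [map_form, hyw]
    simp only [mulVec_smul, smul_dotProduct, dotProduct_smul, hw, smul_eq_mul, map_mul, map_pow]
    ring
  · rintro π hπ ⟨d', rfl⟩
    by_contra! hcon
    choose y' hy' using hcon
    have hπF : algebraMap R F π ≠ 0 := by
      intro h; exact hπ.ne_zero (hinj (by rw [h, map_zero]))
    have h1 : d' ∈ J := by
      refine (hJ d').2 ⟨y', fun i => mul_left_cancel₀ hπF ?_⟩
      rw [← map_mul, ← hy', hy, map_mul, mul_assoc]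
    rw [hdJ, Ideal.mem_span_singleton] at h1
    obtain ⟨t, ht⟩ := h1
    have hd' : d' ≠ 0 := right_ne_zero_of_mul hd0
    apply hπ.not_isUnit
    apply IsUnit.of_mul_eq_one t
    apply mul_left_cancel₀ hd'
    linear_combination -ht

theorem rank_one {F : Type*} [Field F] [Algebra R F] [IsFractionRing R F]
    (G G' : Matrix (Fin 1) (Fin 1) R) (hGd : Squarefree G.det) (hGd' : Squarefree G'.det)
    (h : Cg (G.map (algebraMap R F)) (G'.map (algebraMap R F))) : Cg G G' := by
  obtain ⟨P, -, -, -, hP⟩ := h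
  rw [det_fin_one] at hGd hGd'
  have h1 := congrFun (congrFun hP 0) 0
  simp [Matrix.mul_apply] at h1
  obtain ⟨a, b, hab, hP0⟩ := IsFractionRing.exists_reduced_fraction (A := R) (P 0 0)
  have hb0 : algebraMap R F b ≠ 0 := by
    intro h
    exact nonZeroDivisors.coe_ne_zero b (IsFractionRing.injective R F (by rw [h, map_zero]))
  have h3 : P 0 0 * algebraMap R F b = algebraMap R F a := by
    rw [← hP0]; exact IsLocalization.mk'_spec _ _ _
  have h4 : a * a * G 0 0 = b * b * G' 0 0 := by
    apply IsFractionRing.injective R F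
    simp only [map_mul]
    rw [← h1, ← h3]; ring
  have hcop : IsCoprime (a * a) ((b : R) * b) := by
    have := hab.isCoprime
    exact (this.mul_left this).mul_right (this.mul_left this)
  have hub : IsUnit (b : R) := hGd _ (hcop.symm.dvd_of_dvd_mul_left ⟨_, h4⟩)
  have hua : IsUnit a := hGd' _ (hcop.dvd_of_dvd_mul_left ⟨_, h4.symm⟩)
  obtain ⟨b', hb'⟩ := hub.exists_left_inv
  obtain ⟨a', ha'⟩ := hua.exists_left_inv
  refine ⟨(a * b') • 1, (b * a') • 1, ?_, ?_, ?_⟩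
  · have : (b * a') * (a * b') = 1 := by linear_combination (b' * b) * ha' + hb'
    simp [smul_smul, this]
  · have : (a * b') * (b * a') = 1 := by linear_combination (b' * b) * ha' + hb'
    simp [smul_smul, this]
  · ext i j
    rw [Subsingleton.elim i 0, Subsingleton.elim j 0]
    simp
    linear_combination b' * b' * h4 + (b' * b + 1) * G' 0 0 * hb'

theorem main {F : Type*} [Field F] [Algebra R F] [IsFractionRing R F]
    (hsl : {I : Ideal R | I.IsMaximal}.Finite) (h2 : IsUnit (2 : R)) :
    ∀ (n : ℕ) (G G' : Matrix (Fin n) (Fin n) R), G.IsSymm → G'.IsSymm →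
      Squarefree G.det → Squarefree G'.det →
      Cg (G.map (algebraMap R F)) (G'.map (algebraMap R F)) → Cg G G'
  | 0, G, G', _, _, _, _, _ => ⟨1, 1, by simp, by simp, Subsingleton.elim _ _⟩
  | 1, G, G', _, _, hd, hd', h => rank_one G G' hd hd' h
  | m + 2, G, G', hG, hG', hd, hd', h => by
    obtain ⟨x, hx⟩ := exists_unit_value hsl h2 hG hd
    obtain ⟨u, hu⟩ : ∃ u, x ⬝ᵥ G *ᵥ x = u := ⟨_, rfl⟩
    rw [hu] at hx
    obtain ⟨y, hy⟩ : ∃ y, y ⬝ᵥ G' *ᵥ y = u := by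
      obtain ⟨P, P', h1, -, h3⟩ := h.symm
      refine represent' (F := F) hsl h2 hG' hd' hx (P *ᵥ (algebraMap R F ∘ x)) ?_
      rw [← hu, map_form, ← h3, ← mulVec_mulVec, ← mulVec_mulVec,
        dotProduct_mulVec _ Pᵀ, vecMul_transpose]
    obtain ⟨M, hM⟩ := split hG x hu hx
    obtain ⟨M', hM'⟩ := split hG' y hy hx
    have hc : Fintype.card (Fin (m + 2)) = Fintype.card (Unit ⊕ Fin (m + 1)) := by
      simp; omega
    have hsM := (isSymm_fromBlocks_iff.1 (hM.isSymm hG)).2.2.2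
    have hsM' := (isSymm_fromBlocks_iff.1 (hM'.isSymm hG')).2.2.2
    have hdM := hM.squarefree (Fintype.equivOfCardEq hc) hd
    have hdM' := hM'.squarefree (Fintype.equivOfCardEq hc) hd'
    rw [det_fromBlocks_zero₂₁] at hdM hdM'
    have hdM := hdM.squarefree_of_dvd (dvd_mul_left _ _)
    have hdM' := hdM'.squarefree_of_dvd (dvd_mul_left _ _)
    have hF := ((hM.symm.map (algebraMap R F)).trans h).trans (hM'.map (algebraMap R F))
    have hmap : ∀ N : Matrix (Fin (m + 1)) (Fin (m + 1)) R,
        (Matrix.fromBlocks (u • (1 : Matrix Unit Unit R)) 0 0 N).map (algebraMap R F) =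
        Matrix.fromBlocks (algebraMap R F u • (1 : Matrix Unit Unit F)) 0 0
          (N.map (algebraMap R F)) := by
      intro N
      rw [fromBlocks_map]
      congr 1
      · ext i j; simp
      · ext i j; simp
      · ext i j; simp
    rw [hmap, hmap] at hF
    have hinj := IsFractionRing.injective R F
    have hW := witt (by
        intro h
        exact h2.ne_zero (hinj (by rw [map_ofNat, h, map_zero]))) _ _ _
      (hsM.map _) (by
        intro h
        apply hdM'.ne_zero
        apply hinj
        rw [RingHom.map_det, map_zero]; exact h) hF
    have hrec := main hsl h2 (m + 1) M M' hsM hsM' hdM hdM' hW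
    exact (hM.trans hrec.fromBlocks).trans hM'.symm

end
end SqfreeQF




/-- **Auel–Parimala–Suresh.**  Let `R` be a semilocal Dedekind domain (finitely many maximal
ideals) with `2` invertible, and `F` its fraction field.  If `G, G'` are symmetric matrices
over `R` with squarefree determinants (simple degeneration of multiplicity one), and there is
`P ∈ GL_n(F)` with `Pᵀ G P = G'` over `F`, then there is `Q ∈ GL_n(R)` with `Qᵀ G Q = G'`. -/
theorem squarefree_det_quadratic_forms_rationally_isomorphic_iff_isomorphic
    {R F : Type*} [CommRing R] [IsDomain R] [IsDedekindDomain R]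
    (hsemilocal : {I : Ideal R | I.IsMaximal}.Finite)
    [Field F] [Algebra R F] [IsFractionRing R F]
    (h2 : IsUnit (2 : R)) {n : ℕ}
    (G G' : Matrix (Fin n) (Fin n) R) (hG : G.IsSymm) (hG' : G'.IsSymm)
    (hGdet : Squarefree G.det) (hG'det : Squarefree G'.det)
    (hrat : ∃ P : Matrix (Fin n) (Fin n) F, IsUnit P ∧
      Pᵀ * G.map (algebraMap R F) * P = G'.map (algebraMap R F)) :
    ∃ Q : Matrix (Fin n) (Fin n) R, IsUnit Q ∧ Qᵀ * G * Q = G' := by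
  have : IsPrincipalIdealRing R := IsPrincipalIdealRing.of_finite_maximals hsemilocal
  obtain ⟨P, hPu, hP⟩ := hrat
  have hPd := (Matrix.isUnit_iff_isUnit_det P).1 hPu
  obtain ⟨Q, Q', h1, h3, h4⟩ := SqfreeQF.main (F := F) hsemilocal h2 n G G' hG hG' hGdet hG'det
    ⟨P, P⁻¹, Matrix.mul_nonsing_inv _ hPd, Matrix.nonsing_inv_mul _ hPd, hP⟩
  exact ⟨Q, ⟨⟨Q, Q', h1, h3⟩, rfl⟩, h4⟩
end

section
/- Let A be a semilocal ring (i.e., A/Jac(A) is semisimple). Let P, Q, P', Q' be finitely generated projective right A-modules and let f : P → Q and f' : P' → Q' be A-linear maps. Then there exist A-module isomorphisms φ : P → P' and ψ : Q → Q' with f' ∘ φ = ψ ∘ f if and only if P ≅ P', Q ≅ Q', and coker(f) ≅ coker(f') as A-modules. -/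
namespace SemilocalAux

open LinearMap

section semisimple

variable {R S : Type*} [Ring R] [AddCommGroup S] [Module R S]

/-- If an endomorphism of a noetherian semisimple module kills a simple submodule `T`,
then there is a nonzero map from `T` to its cokernel. -/
theorem exists_hom_coker [IsSemisimpleModule R S] [IsNoetherian R S] (a : S →ₗ[R] S)
    (T : Submodule R S) [IsSimpleModule R T] (hT : T ≤ ker a) :
    ∃ h : T →ₗ[R] (S ⧸ range a), h ≠ 0 := by
  by_contra! H
  set I := isotypicComponent R S T with hI
  have hTT : isotypicComponent R T T = ⊤ :=
    top_le_iff.mp (le_sSup ⟨Submodule.topEquiv⟩)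
  have hmap : ∀ x ∈ I, a x ∈ I := fun x hx ↦ a.le_comap_isotypicComponent (S := T) hx
  have key : I ≤ I.map a := by
    refine sSup_le ?_
    rintro m ⟨e⟩
    intro x hx
    let g : T →ₗ[R] S := m.subtype ∘ₗ e.symm.toLinearMap
    have hg : ∀ t, g t ∈ range a := by
      intro t
      have := LinearMap.congr_fun (H ((range a).mkQ ∘ₗ g)) t
      simpa using this
    obtain ⟨h, hh⟩ := IsSemisimpleModule.lifting_property a.rangeRestrict
      a.surjective_rangeRestrict (g.codRestrict _ hg)
    refine ⟨h (e ⟨x, hx⟩), ?_, ?_⟩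
    · have := h.le_comap_isotypicComponent (S := T) (x := e ⟨x, hx⟩) (by rw [hTT]; trivial)
      exact this
    · have := congrArg Subtype.val (LinearMap.congr_fun hh (e ⟨x, hx⟩))
      simpa [g] using this
  let b : I →ₗ[R] I := a.restrict hmap
  have hb : Function.Surjective b := by
    rintro ⟨y, hy⟩
    obtain ⟨x, hx, rfl⟩ := key hy
    exact ⟨⟨x, hx⟩, rfl⟩
  have hinj := IsNoetherian.injective_of_surjective_endomorphism b hb
  have hTI : T ≤ I := T.le_isotypicComponent
  have : Nontrivial T := IsSimpleModule.nontrivial R T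
  obtain ⟨t, ht⟩ := exists_ne (0 : T)
  apply ht
  have h0 : b ⟨t, hTI t.2⟩ = b 0 := by
    rw [map_zero]
    exact Subtype.ext (hT t.2)
  have := congrArg Subtype.val (hinj h0)
  exact Subtype.ext this

/-- Stable range one for endomorphisms of finite length semisimple modules. -/
theorem exists_bijective_add [IsSemisimpleModule R S] [IsNoetherian R S] [IsArtinian R S]
    (d : S →ₗ[R] S) (K : Submodule R S) :
    ∀ a : S →ₗ[R] S, ker a = K → range a ⊔ range d = ⊤ →
      ∃ c : S →ₗ[R] S, Function.Bijective (a + d ∘ₗ c) := by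
  induction K using WellFoundedLT.induction with
  | ind K ih =>
    intro a ha hd
    obtain hK | ⟨T, hTK, hT⟩ := IsSemisimpleModule.eq_bot_or_exists_simple_le K
    · refine ⟨0, ?_⟩
      rw [comp_zero, add_zero]
      exact IsArtinian.bijective_of_injective_endomorphism a
        (LinearMap.ker_eq_bot.mp (ha.trans hK))
    · obtain ⟨h, hne⟩ := exists_hom_coker a T (ha ▸ hTK)
      have hinj := LinearMap.injective_of_ne_zero hne
      have hsurj : Function.Surjective ((range a).mkQ ∘ₗ d) := by
        intro y
        obtain ⟨y, rfl⟩ := (range a).mkQ_surjective y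
        have : y ∈ range a ⊔ range d := by rw [hd]; trivial
        obtain ⟨u, hu, v, ⟨w, rfl⟩, rfl⟩ := Submodule.mem_sup.mp this
        refine ⟨w, ?_⟩
        simpa using hu
      obtain ⟨h', hh'⟩ := IsSemisimpleModule.lifting_property _ hsurj h
      obtain ⟨p, hp⟩ := IsSemisimpleModule.extension_property T.subtype T.injective_subtype
        (LinearMap.id)
      let a' := a + d ∘ₗ (h' ∘ₗ p)
      have hker : ∀ x, a' x = 0 → p x = 0 ∧ a x = 0 := by
        intro x hx
        have hx' : a x + d (h' (p x)) = 0 := hx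
        have h1 : p x = 0 := by
          apply hinj
          rw [map_zero, ← hh']
          have := congrArg (range a).mkQ hx'
          rw [map_add, map_zero] at this
          have h2 : (range a).mkQ (a x) = 0 := by simp
          rw [h2, zero_add] at this
          exact this
        refine ⟨h1, ?_⟩
        simpa [h1] using hx'
      have hlt : ker a' < K := by
        refine lt_of_le_of_ne (fun x hx ↦ ha ▸ (hker x hx).2) ?_
        rintro heq
        have : Nontrivial T := IsSimpleModule.nontrivial R T
        obtain ⟨t, ht⟩ := exists_ne (0 : T)
        apply ht
        have h1 : (t : S) ∈ ker a' := heq ▸ hTK t.2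
        have h2 : p (t : S) = t := LinearMap.congr_fun hp t
        rw [← h2]
        exact (hker _ h1).1
      obtain ⟨c, hc⟩ := ih _ hlt a' rfl (by
        rw [eq_top_iff, ← hd]
        refine sup_le ?_ le_sup_right
        rintro _ ⟨x, rfl⟩
        have : a x = a' x - d (h' (p x)) := by simp [a']
        rw [this]
        exact sub_mem (Submodule.mem_sup_left ⟨x, rfl⟩) (Submodule.mem_sup_right ⟨_, rfl⟩))
      refine ⟨h' ∘ₗ p + c, ?_⟩
      rw [comp_add, ← add_assoc]
      exact hc

end semisimple

section semilocal

variable {R : Type*} [Ring R]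

theorem semisimple_of_killed (h : IsSemisimpleModule R (R ⧸ Ring.jacobson R))
    {S : Type*} [AddCommGroup S] [Module R S]
    (hS : ∀ r ∈ Ring.jacobson R, ∀ s : S, r • s = 0) : IsSemisimpleModule R S := by
  let g : S → ((R ⧸ Ring.jacobson R) →ₗ[R] S) := fun s ↦
    (Ring.jacobson R).liftQ (LinearMap.toSpanSingleton R S s) (fun r hr ↦ hS r hr s)
  refine isSemisimpleModule_of_isSemisimpleModule_submodule' (p := fun s ↦ range (g s))
    (fun s ↦ IsSemisimpleModule.range _) ?_
  rw [eq_top_iff]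
  intro s _
  refine Submodule.mem_iSup_of_mem s ⟨(Ring.jacobson R).mkQ 1, ?_⟩
  exact one_smul R s

variable {X : Type*} [AddCommGroup X] [Module R X]

theorem surjective_of_mod [Module.Finite R X] (t : X →ₗ[R] X)
    (h : Function.Surjective ((Module.jacobson R X).mapQ (Module.jacobson R X) t
      (Module.le_comap_jacobson t))) : Function.Surjective t := by
  rw [← LinearMap.range_eq_top]
  by_contra hne
  obtain ⟨m, hm, hle⟩ := (eq_top_or_exists_le_coatom (range t)).resolve_left hne
  apply hm.1
  rw [eq_top_iff]
  intro x _
  obtain ⟨y, hy⟩ := h ((Module.jacobson R X).mkQ x)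
  obtain ⟨y, rfl⟩ := (Module.jacobson R X).mkQ_surjective y
  have h1 : t y - x ∈ Module.jacobson R X := by
    rw [← Submodule.Quotient.eq]
    exact hy
  have h2 : t y - x ∈ m := (sInf_le hm : Module.jacobson R X ≤ m) h1
  have h3 : t y ∈ m := hle ⟨y, rfl⟩
  simpa using sub_mem h3 h2

theorem bijective_of_mod [Module.Finite R X] [Module.Projective R X] (t : X →ₗ[R] X)
    (h : Function.Bijective ((Module.jacobson R X).mapQ (Module.jacobson R X) t
      (Module.le_comap_jacobson t))) : Function.Bijective t := by
  have hs := surjective_of_mod t h.2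
  obtain ⟨s, hts⟩ := Module.projective_lifting_property t LinearMap.id hs
  have hss : Function.Surjective s := by
    apply surjective_of_mod
    intro y
    obtain ⟨y, rfl⟩ := (Module.jacobson R X).mkQ_surjective y
    refine ⟨(Module.jacobson R X).mkQ (t y), h.1 ?_⟩
    have := LinearMap.congr_fun hts (t y)
    simp only [LinearMap.comp_apply, LinearMap.id_apply] at this
    simp [this]
  refine ⟨fun x y hxy ↦ ?_, hs⟩
  obtain ⟨x, rfl⟩ := hss x
  obtain ⟨y, rfl⟩ := hss y
  have h1 := LinearMap.congr_fun hts x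
  have h2 := LinearMap.congr_fun hts y
  simp only [LinearMap.comp_apply, LinearMap.id_apply] at h1 h2
  rw [← h1, ← h2, hxy]

/-- Two surjections from a f.g. projective module over a semilocal ring differ by an
automorphism. -/
theorem exists_equiv_of_surjective (hR : IsSemisimpleModule R (R ⧸ Ring.jacobson R))
    [Module.Finite R X] [Module.Projective R X] {M : Type*} [AddCommGroup M] [Module R M]
    (p p' : X →ₗ[R] M) (hp : Function.Surjective p) (hp' : Function.Surjective p') :
    ∃ t : X ≃ₗ[R] X, ∀ x, p' (t x) = p x := by
  obtain ⟨a, ha⟩ := Module.projective_lifting_property p' p hp'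
  obtain ⟨b, hb⟩ := Module.projective_lifting_property p p' hp
  let J := Module.jacobson R X
  have hle : ∀ t : X →ₗ[R] X, J ≤ J.comap t := fun t ↦ Module.le_comap_jacobson t
  have : IsSemisimpleModule R (X ⧸ J) := by
    apply semisimple_of_killed hR
    intro r hr s
    obtain ⟨s, rfl⟩ := J.mkQ_surjective s
    rw [← map_smul, Submodule.mkQ_apply, Submodule.Quotient.mk_eq_zero]
    exact Ring.jacobson_smul_top_le R X (Submodule.smul_mem_smul hr trivial)
  have hfin : Module.Finite R (X ⧸ J) := inferInstance
  have : IsArtinian R (X ⧸ J) :=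
    ((IsSemisimpleModule.finite_tfae (R := R) (M := X ⧸ J)).out 0 2).mp hfin
  let d : X →ₗ[R] X := LinearMap.id - a ∘ₗ b
  have hd : ∀ x, p' (d x) = 0 := by
    intro x
    have h1 := LinearMap.congr_fun ha (b x)
    have h2 := LinearMap.congr_fun hb x
    simp only [LinearMap.comp_apply] at h1 h2
    simp [d, h1, h2]
  obtain ⟨c', hc'⟩ := exists_bijective_add (J.mapQ J d (hle d)) _ (J.mapQ J a (hle a)) rfl (by
    rw [eq_top_iff]
    intro x _
    obtain ⟨x, rfl⟩ := J.mkQ_surjective x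
    have : J.mkQ x = J.mapQ J a (hle a) (J.mkQ (b x)) + J.mapQ J d (hle d) (J.mkQ x) := by
      simp [d]
    rw [this]
    exact Submodule.add_mem_sup ⟨_, rfl⟩ ⟨_, rfl⟩)
  obtain ⟨c, hc⟩ := Module.projective_lifting_property J.mkQ (c' ∘ₗ J.mkQ) J.mkQ_surjective
  have hbij : Function.Bijective (a + d ∘ₗ c) := by
    apply bijective_of_mod
    convert hc' using 2
    refine LinearMap.ext fun x ↦ ?_
    obtain ⟨x, rfl⟩ := J.mkQ_surjective x
    have := LinearMap.congr_fun hc x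
    simp only [LinearMap.comp_apply] at this
    rw [LinearMap.add_apply, LinearMap.comp_apply, ← this]
    simp [J]
  refine ⟨LinearEquiv.ofBijective _ hbij, fun x ↦ ?_⟩
  have h1 := LinearMap.congr_fun ha x
  simp only [LinearMap.comp_apply] at h1
  simp [hd, h1]

end semilocal

section opposite

variable {A : Type*} [Ring A]

theorem op_mem_jacobson {x : A} (hx : x ∈ Ring.jacobson A) :
    MulOpposite.op x ∈ Ring.jacobson Aᵐᵒᵖ := by
  rw [← Ideal.jacobson_bot, Ideal.mem_jacobson_iff] at hx ⊢
  intro y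
  obtain ⟨y, rfl⟩ := MulOpposite.op_surjective y
  obtain ⟨z, hz⟩ := hx y
  obtain ⟨w, hw⟩ := hx (-(z * y))
  rw [Ideal.mem_bot] at hz hw
  have hz1 : z * (y * x + 1) = 1 := by
    rw [← sub_eq_zero, ← hz]; noncomm_ring
  have hw1 : w * z = 1 := by
    have : z = 1 - z * y * x := by rw [← sub_eq_zero, ← hz]; noncomm_ring
    rw [this, ← sub_eq_zero, ← hw]; noncomm_ring
  have hwe : w = y * x + 1 := left_inv_eq_right_inv hw1 hz1
  rw [hwe] at hw1
  -- inverse of `1 + x y` is `1 - x z y`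
  refine ⟨MulOpposite.op (1 - x * z * y), ?_⟩
  rw [Ideal.mem_bot]
  apply MulOpposite.unop_injective
  simp only [MulOpposite.unop_sub, MulOpposite.unop_add, MulOpposite.unop_mul,
    MulOpposite.unop_op, MulOpposite.unop_one, MulOpposite.unop_zero]
  have : x * (y * (1 - x * z * y)) + (1 - x * z * y) - 1 = x * (1 - (y * x + 1) * z) * y := by
    noncomm_ring
  rw [this, hw1]
  simp

theorem semilocal_op (h : IsSemisimpleModule A (A ⧸ Ideal.jacobson (⊥ : Ideal A))) :
    IsSemisimpleModule Aᵐᵒᵖ (Aᵐᵒᵖ ⧸ Ring.jacobson Aᵐᵒᵖ) := by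
  rw [Ideal.jacobson_bot] at h
  have h1 : IsSemisimpleRing (A ⧸ Ring.jacobson A) := by
    let l : (A ⧸ Ring.jacobson A) →ₛₗ[Ideal.Quotient.mk (Ring.jacobson A)]
        (A ⧸ Ring.jacobson A) :=
      { toFun := id
        map_add' := fun _ _ ↦ rfl
        map_smul' := fun r x ↦ by
          obtain ⟨x, rfl⟩ := Ideal.Quotient.mk_surjective x
          rfl }
    have : RingHomSurjective (Ideal.Quotient.mk (Ring.jacobson A)) :=
      ⟨Ideal.Quotient.mk_surjective⟩
    exact (l.isSemisimpleModule_iff_of_bijective Function.bijective_id).mp h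
  let g : A →+* (Aᵐᵒᵖ ⧸ Ring.jacobson Aᵐᵒᵖ)ᵐᵒᵖ :=
    { toFun := fun a ↦ MulOpposite.op (Ideal.Quotient.mk _ (MulOpposite.op a))
      map_one' := rfl
      map_zero' := rfl
      map_mul' := fun _ _ ↦ rfl
      map_add' := fun _ _ ↦ rfl }
  let g' : (A ⧸ Ring.jacobson A) →+* (Aᵐᵒᵖ ⧸ Ring.jacobson Aᵐᵒᵖ)ᵐᵒᵖ :=
    Ideal.Quotient.lift _ g (fun a ha ↦ by
      apply MulOpposite.unop_injective
      exact Ideal.Quotient.eq_zero_iff_mem.mpr (op_mem_jacobson ha))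
  have hg' : Function.Surjective g' := by
    intro y
    obtain ⟨y, rfl⟩ := MulOpposite.op_surjective y
    obtain ⟨y, rfl⟩ := Ideal.Quotient.mk_surjective y
    obtain ⟨y, rfl⟩ := MulOpposite.op_surjective y
    exact ⟨Ideal.Quotient.mk _ y, rfl⟩
  have h2 := g'.isSemisimpleRing_of_surjective hg'
  have h3 : IsSemisimpleRing (Aᵐᵒᵖ ⧸ Ring.jacobson Aᵐᵒᵖ) :=
    isSemisimpleRing_mulOpposite_iff.mp h2
  let l : (Aᵐᵒᵖ ⧸ Ring.jacobson Aᵐᵒᵖ) →ₛₗ[Ideal.Quotient.mk (Ring.jacobson Aᵐᵒᵖ)]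
      (Aᵐᵒᵖ ⧸ Ring.jacobson Aᵐᵒᵖ) :=
    { toFun := id
      map_add' := fun _ _ ↦ rfl
      map_smul' := fun r x ↦ by
        obtain ⟨x, rfl⟩ := Ideal.Quotient.mk_surjective x
        rfl }
  have : RingHomSurjective (Ideal.Quotient.mk (Ring.jacobson Aᵐᵒᵖ)) :=
    ⟨Ideal.Quotient.mk_surjective⟩
  exact (l.isSemisimpleModule_iff_of_bijective Function.bijective_id).mpr h3

end opposite

end SemilocalAux

/-- **Isomorphism in the category of morphisms of f.g. projective modules over a semilocal
ring.**  Let `A` be a semilocal ring (`A/Jac(A)` is semisimple).  Let `f : P → Q` and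
`f' : P' → Q'` be `A`-linear maps between finitely generated projective right `A`-modules.
Then `(P, f, Q) ≅ (P', f', Q')` in the category of morphisms (i.e. there are isomorphisms
`φ : P ≅ P'` and `ψ : Q ≅ Q'` with `f' ∘ φ = ψ ∘ f`) if and only if `P ≅ P'`, `Q ≅ Q'` and
`coker f ≅ coker f'`. -/
theorem morphism_iso_iff_modules_and_coker_iso
    {A : Type*} [Ring A]
    (hsemilocal : IsSemisimpleModule A (A ⧸ Ideal.jacobson (⊥ : Ideal A)))
    {P Q P' Q' : Type*}
    [AddCommGroup P] [AddCommGroup Q] [AddCommGroup P'] [AddCommGroup Q']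
    [Module Aᵐᵒᵖ P] [Module Aᵐᵒᵖ Q] [Module Aᵐᵒᵖ P'] [Module Aᵐᵒᵖ Q']
    [Module.Finite Aᵐᵒᵖ P] [Module.Projective Aᵐᵒᵖ P]
    [Module.Finite Aᵐᵒᵖ Q] [Module.Projective Aᵐᵒᵖ Q]
    [Module.Finite Aᵐᵒᵖ P'] [Module.Projective Aᵐᵒᵖ P']
    [Module.Finite Aᵐᵒᵖ Q'] [Module.Projective Aᵐᵒᵖ Q']
    (f : P →ₗ[Aᵐᵒᵖ] Q) (f' : P' →ₗ[Aᵐᵒᵖ] Q') :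
    (∃ (φ : P ≃ₗ[Aᵐᵒᵖ] P') (ψ : Q ≃ₗ[Aᵐᵒᵖ] Q'), ∀ x : P, f' (φ x) = ψ (f x)) ↔
      (Nonempty (P ≃ₗ[Aᵐᵒᵖ] P') ∧ Nonempty (Q ≃ₗ[Aᵐᵒᵖ] Q') ∧
        Nonempty ((Q ⧸ LinearMap.range f) ≃ₗ[Aᵐᵒᵖ] (Q' ⧸ LinearMap.range f'))) := by
  constructor
  · rintro ⟨φ, ψ, h⟩
    refine ⟨⟨φ⟩, ⟨ψ⟩, ⟨Submodule.Quotient.equiv _ _ ψ ?_⟩⟩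
    ext y
    constructor
    · rintro ⟨_, ⟨x, rfl⟩, rfl⟩
      exact ⟨φ x, h x⟩
    · rintro ⟨x, rfl⟩
      refine ⟨f (φ.symm x), ⟨_, rfl⟩, ?_⟩
      have := h (φ.symm x)
      rw [LinearEquiv.apply_symm_apply] at this
      exact this.symm
  · rintro ⟨⟨eP⟩, ⟨eQ⟩, ⟨eC⟩⟩
    have hR := SemilocalAux.semilocal_op hsemilocal
    -- automorphism of `Q` matching the cokernel projections
    obtain ⟨t, ht⟩ := SemilocalAux.exists_equiv_of_surjective hR
      (eC.toLinearMap ∘ₗ (LinearMap.range f).mkQ)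
      ((LinearMap.range f').mkQ ∘ₗ eQ.toLinearMap)
      (eC.surjective.comp (Submodule.mkQ_surjective _))
      ((Submodule.mkQ_surjective _).comp eQ.surjective)
    let ψ : Q ≃ₗ[Aᵐᵒᵖ] Q' := t.trans eQ
    have hψ : ∀ x, ψ x ∈ LinearMap.range f' ↔ x ∈ LinearMap.range f := by
      intro x
      rw [← Submodule.Quotient.mk_eq_zero (LinearMap.range f'),
        ← Submodule.Quotient.mk_eq_zero (LinearMap.range f)]
      have h1 : (Submodule.Quotient.mk (ψ x) : Q' ⧸ LinearMap.range f') =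
        eC (Submodule.Quotient.mk x) := ht x
      rw [h1]
      exact eC.map_eq_zero_iff
    let q : P →ₗ[Aᵐᵒᵖ] LinearMap.range f' :=
      (ψ.toLinearMap ∘ₗ f).codRestrict _ (fun x ↦ (hψ (f x)).mpr ⟨x, rfl⟩)
    have hq : Function.Surjective q := by
      rintro ⟨y, hy⟩
      obtain ⟨z, rfl⟩ := ψ.surjective y
      obtain ⟨x, rfl⟩ := (hψ z).mp hy
      exact ⟨x, rfl⟩
    obtain ⟨s, hs⟩ := SemilocalAux.exists_equiv_of_surjective hR q
      (f'.rangeRestrict ∘ₗ eP.toLinearMap) hq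
      (f'.surjective_rangeRestrict.comp eP.surjective)
    exact ⟨s.trans eP, ψ, fun x ↦ congrArg Subtype.val (hs x)⟩
end

section
/- Let A be a semilocal ring (i.e., A/Jac(A) is semisimple). Let V and V' be isomorphic finitely generated projective right A-modules, let U and U' be arbitrary right A-modules, let α : V → U and α' : V' → U' be surjective A-linear maps, and let ξ : U → U' be an A-module isomorphism. Then there exists an A-module isomorphism ψ : V → V' such that ξ ∘ α = α' ∘ ψ. -/
namespace SemilocalLift

/-- Cancellation of a simple module. -/
theorem cancel_simple {R S M N : Type*} [Ring R] [AddCommGroup S] [AddCommGroup M]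
    [AddCommGroup N] [Module R S] [Module R M] [Module R N] [IsSimpleModule R S]
    (e : (S × M) ≃ₗ[R] (S × N)) : Nonempty (M ≃ₗ[R] N) := by
  let p : S × N →ₗ[R] S := LinearMap.fst R S N
  let q : S × N →ₗ[R] S := LinearMap.fst R S M ∘ₗ e.symm.toLinearMap
  obtain ⟨i, hp, hq⟩ : ∃ i : S →ₗ[R] S × N, Function.Bijective (p ∘ₗ i) ∧
      Function.Bijective (q ∘ₗ i) := by
    have := IsSimpleModule.nontrivial R S
    have hid : (LinearMap.id : S →ₗ[R] S) ≠ 0 := by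
      obtain ⟨x, hx⟩ := exists_ne (0 : S)
      exact fun h => hx (by simpa using LinearMap.congr_fun h x)
    let i1 : S →ₗ[R] S × N := LinearMap.inl R S N
    let i2 : S →ₗ[R] S × N := e.toLinearMap ∘ₗ LinearMap.inl R S M
    have h1 : p ∘ₗ i1 = LinearMap.id := by ext; simp [p, i1]
    have h2 : q ∘ₗ i2 = LinearMap.id := by ext; simp [q, i2]
    by_cases c1 : q ∘ₗ i1 = 0
    · by_cases c2 : p ∘ₗ i2 = 0
      · refine ⟨i1 + i2, ?_, ?_⟩
        · rw [LinearMap.comp_add, h1, c2, add_zero]; exact Function.bijective_id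
        · rw [LinearMap.comp_add, h2, c1, zero_add]; exact Function.bijective_id
      · exact ⟨i2, LinearMap.bijective_of_ne_zero c2,
          LinearMap.bijective_of_ne_zero (h2 ▸ hid)⟩
    · exact ⟨i1, LinearMap.bijective_of_ne_zero (h1 ▸ hid),
        LinearMap.bijective_of_ne_zero c1⟩
  let a := LinearEquiv.ofBijective _ hp
  let b := LinearEquiv.ofBijective _ hq
  have ha : ∀ x, p (i (a.symm x)) = x := fun x => a.apply_symm_apply x
  have ha' : ∀ x, a.symm (p (i x)) = x := fun x => a.symm_apply_apply x
  have hb : ∀ x, q (i (b.symm x)) = x := fun x => b.apply_symm_apply x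
  have hb' : ∀ x, b.symm (q (i x)) = x := fun x => b.symm_apply_apply x
  let F : S × N →ₗ[R] S × N := LinearMap.id - i ∘ₗ b.symm.toLinearMap ∘ₗ q
  let G : S × N →ₗ[R] S × N := LinearMap.id - i ∘ₗ a.symm.toLinearMap ∘ₗ p
  have hF : ∀ x, F x = x - i (b.symm (q x)) := fun x => rfl
  have hG : ∀ x, G x = x - i (a.symm (p x)) := fun x => rfl
  let f : N →ₗ[R] M := LinearMap.snd R S M ∘ₗ e.symm.toLinearMap ∘ₗ F ∘ₗ LinearMap.inr R S N
  let g : M →ₗ[R] N := LinearMap.snd R S N ∘ₗ G ∘ₗ e.toLinearMap ∘ₗ LinearMap.inr R S M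
  have hqF : ∀ x, q (F x) = 0 := fun x => by rw [hF, map_sub, hb, sub_self]
  have hpG : ∀ x, p (G x) = 0 := fun x => by rw [hG, map_sub, ha, sub_self]
  have k1 : ∀ n : N, e (0, f n) = F (0, n) := fun n => by
    rw [← LinearEquiv.eq_symm_apply]
    exact Prod.ext (hqF (0, n)).symm rfl
  have k2 : ∀ m : M, ((0, g m) : S × N) = G (e (0, m)) := fun m =>
    Prod.ext (hpG (e (0, m))).symm rfl
  have GF : ∀ x, p x = 0 → G (F x) = x := fun x hx => by
    rw [hG, hF, map_sub, hx, zero_sub, map_neg, ha', map_neg]; abel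
  have FG : ∀ x, q x = 0 → F (G x) = x := fun x hx => by
    rw [hF, hG, map_sub, hx, zero_sub, map_neg, hb', map_neg]; abel
  refine ⟨LinearEquiv.ofLinearMap g f ?_ ?_⟩
  · ext n
    have := k2 (f n)
    rw [k1, GF _ rfl] at this
    exact congrArg Prod.snd this
  · ext m
    have := k1 (g m)
    rw [k2, FG _ (by simp [q])] at this
    exact congrArg Prod.snd (e.injective this)

/-- Cancellation of a semisimple module of finite length. -/
theorem cancel_semisimple.{u, x, v, w} {R : Type u} {X : Type x} [Ring R] [AddCommGroup X] [Module R X]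
    (hX : IsFiniteLength R X) : ∀ [IsSemisimpleModule R X] {M : Type v} {N : Type w} [AddCommGroup M]
    [AddCommGroup N] [Module R M] [Module R N]
    (_ : (X × M) ≃ₗ[R] (X × N)), Nonempty (M ≃ₗ[R] N) := by
  induction hX with
  | @of_subsingleton X _ _ hsub =>
    intro _ M N _ _ _ _ e
    have : Unique X := uniqueOfSubsingleton 0
    exact ⟨(LinearEquiv.uniqueProd).symm.trans (e.trans LinearEquiv.uniqueProd)⟩
  | @of_simple_quotient X _ _ Y _ _ ih =>
    intro _ M N _ _ _ _ e
    obtain ⟨Z, hZ⟩ := exists_isCompl Y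
    have d : X ≃ₗ[R] (X ⧸ Y) × Y :=
      (Submodule.prodEquivOfIsCompl Y Z hZ).symm.trans
        ((LinearEquiv.prodComm R Y Z).trans
          ((Submodule.quotientEquivOfIsCompl Y Z hZ).symm.prodCongr (LinearEquiv.refl R Y)))
    have e' : ((X ⧸ Y) × (Y × M)) ≃ₗ[R] ((X ⧸ Y) × (Y × N)) :=
      (LinearEquiv.prodAssoc R _ _ _).symm.trans
      ((d.symm.prodCongr (LinearEquiv.refl R M)).trans (e.trans
        ((d.prodCongr (LinearEquiv.refl R N)).trans (LinearEquiv.prodAssoc R _ _ _))))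
    obtain ⟨e''⟩ := cancel_simple e'
    exact ih e''

theorem semisimple_correct {R M N : Type*} [Ring R] [AddCommGroup M] [AddCommGroup N]
    [Module R M] [Module R N] [IsSemisimpleModule R M] [IsSemisimpleModule R N]
    [Module.Finite R N] (e : M ≃ₗ[R] N) (f : M →ₗ[R] N) (K : Submodule R N)
    (hK : LinearMap.range f ⊔ K = ⊤) :
    ∃ h : M →ₗ[R] N, (∀ x, h x ∈ K) ∧ Function.Bijective (f + h) := by
  obtain ⟨C, hC⟩ := exists_isCompl (LinearMap.ker f)
  obtain ⟨D', hD'⟩ := exists_isCompl (LinearMap.range f ⊓ K)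
  let D := D' ⊓ K
  have hD : IsCompl (LinearMap.range f) D := by
    constructor
    · rw [disjoint_iff]
      have := hD'.inf_eq_bot
      rw [← this]
      simp only [D]
      ac_rfl
    · rw [codisjoint_iff]
      have h1 : (LinearMap.range f ⊓ K) ⊔ D = K := by
        simp only [D]
        rw [sup_inf_assoc_of_le D' (inf_le_right : LinearMap.range f ⊓ K ≤ K) |>.symm,
          hD'.sup_eq_top, top_inf_eq]
      rw [eq_top_iff, ← hK]
      refine sup_le le_sup_left ?_
      conv_lhs => rw [← h1]
      exact sup_le (inf_le_left.trans le_sup_left) le_sup_right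
  have hfl : IsFiniteLength R (LinearMap.range f) :=
    ((IsSemisimpleModule.finite_tfae (R := R) (M := LinearMap.range f)).out 0 3).mp
      (inferInstance : Module.Finite R (LinearMap.range f))
  have e1 : (LinearMap.range f × LinearMap.ker f) ≃ₗ[R] M :=
    (((f.quotKerEquivRange.symm.trans (Submodule.quotientEquivOfIsCompl _ C hC)).prodCongr
      (LinearEquiv.refl R _)).trans (LinearEquiv.prodComm R _ _)).trans
      (Submodule.prodEquivOfIsCompl _ C hC)
  have e2 : (LinearMap.range f × D) ≃ₗ[R] N := Submodule.prodEquivOfIsCompl _ D hD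
  obtain ⟨θ⟩ : Nonempty (LinearMap.ker f ≃ₗ[R] D) :=
    cancel_semisimple hfl (e1.trans (e.trans e2.symm))
  let π := Submodule.projectionOnto _ C hC
  have hπ : ∀ x : LinearMap.ker f, π x = x := Submodule.projectionOnto_apply_left hC
  refine ⟨D.subtype ∘ₗ θ.toLinearMap ∘ₗ π, fun x => (θ (π x)).2.2, ?_, ?_⟩
  · rw [← LinearMap.ker_eq_bot, LinearMap.ker_eq_bot']
    intro x hx
    have hx : f x + (θ (π x) : N) = 0 := hx
    have hm : (θ (π x) : N) ∈ LinearMap.range f := by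
      rw [← neg_eq_of_add_eq_zero_right hx]
      exact neg_mem ⟨x, rfl⟩
    have h0 : (θ (π x) : N) = 0 := Submodule.disjoint_def.mp hD.disjoint _ hm (θ (π x)).2
    have h1 : f x = 0 := by simpa [h0] using hx
    have h2 : π x = 0 := by simpa using h0
    have := hπ ⟨x, h1⟩
    rw [h2] at this
    simpa using (congrArg Subtype.val this).symm
  · intro n
    have : n ∈ LinearMap.range f ⊔ D := hD.sup_eq_top ▸ Submodule.mem_top
    obtain ⟨_, ⟨a, rfl⟩, d, hd, rfl⟩ := Submodule.mem_sup.mp this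
    refine ⟨a - (π a : M) + (θ.symm ⟨d, hd⟩ : M), ?_⟩
    have h1 : f (π a : M) = 0 := (π a).2
    have h2 : f (θ.symm ⟨d, hd⟩ : M) = 0 := (θ.symm ⟨d, hd⟩).2
    simp [h1, h2, hπ]

theorem semisimple_quot {R M : Type*} [Ring R] [AddCommGroup M] [Module R M] (I : Ideal R)
    [IsSemisimpleModule R (R ⧸ I)] :
    IsSemisimpleModule R (M ⧸ (I • ⊤ : Submodule R M)) := by
  let g : M → (R ⧸ I) →ₗ[R] (M ⧸ (I • ⊤ : Submodule R M)) := fun m =>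
    Submodule.liftQ I ((I • ⊤ : Submodule R M).mkQ ∘ₗ LinearMap.toSpanSingleton R M m) (by
      intro r hr
      rw [LinearMap.mem_ker]
      simp only [LinearMap.comp_apply, LinearMap.toSpanSingleton_apply, Submodule.mkQ_apply]
      rw [Submodule.Quotient.mk_eq_zero]
      exact Submodule.smul_mem_smul hr trivial)
  refine isSemisimpleModule_of_isSemisimpleModule_submodule' (p := fun m => LinearMap.range (g m))
    (fun m => IsSemisimpleModule.range (g m)) ?_
  rw [eq_top_iff]
  rintro x -
  obtain ⟨m, rfl⟩ := Submodule.mkQ_surjective _ x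
  refine Submodule.mem_iSup_of_mem m ⟨Submodule.Quotient.mk 1, ?_⟩
  simp [g]

theorem nakayama {R M N : Type*} [Ring R] [AddCommGroup M] [AddCommGroup N]
    [Module R M] [Module R N] [Module.Finite R N] (I : Ideal R) (hI : I ≤ Ring.jacobson R)
    (f : M →ₗ[R] N) (h : LinearMap.range f ⊔ I • ⊤ = ⊤) : Function.Surjective f := by
  have key : (⊤ : Submodule R (N ⧸ LinearMap.range f)) = ⊥ := by
    refine Submodule.FG.eq_bot_of_le_jacobson_smul Module.Finite.fg_top ?_
    refine le_trans ?_ (Submodule.smul_mono_left hI)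
    have := congrArg (Submodule.map (LinearMap.range f).mkQ) h
    rw [Submodule.map_sup, Submodule.map_smul'', Submodule.mkQ_map_self, bot_sup_eq,
      Submodule.map_top, Submodule.range_mkQ] at this
    exact this.ge
  rw [← LinearMap.range_eq_top, ← Submodule.Quotient.subsingleton_iff]
  exact (Submodule.subsingleton_iff R).mp (subsingleton_of_bot_eq_top key.symm)

theorem main {R V V' U U' : Type*} [Ring R] (I : Ideal R) (hI : I ≤ Ring.jacobson R)
    [IsSemisimpleModule R (R ⧸ I)]
    [AddCommGroup V] [AddCommGroup V'] [AddCommGroup U] [AddCommGroup U']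
    [Module R V] [Module R V'] [Module R U] [Module R U']
    [Module.Finite R V] [Module.Projective R V]
    [Module.Finite R V'] [Module.Projective R V']
    (e : V ≃ₗ[R] V')
    (α : V →ₗ[R] U) (hα : Function.Surjective α)
    (α' : V' →ₗ[R] U') (hα' : Function.Surjective α')
    (ξ : U ≃ₗ[R] U') :
    ∃ ψ : V ≃ₗ[R] V', ∀ x : V, ξ (α x) = α' (ψ x) := by
  let J : Submodule R V := I • ⊤
  let J' : Submodule R V' := I • ⊤
  have : IsSemisimpleModule R (V ⧸ J) := semisimple_quot I
  have : IsSemisimpleModule R (V' ⧸ J') := semisimple_quot I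
  have le : ∀ f : V →ₗ[R] V', J ≤ J'.comap f := fun f => by
    rw [← Submodule.map_le_iff_le_comap, Submodule.map_smul'']
    exact smul_mono_right _ le_top
  have le' : ∀ f : V' →ₗ[R] V, J' ≤ J.comap f := fun f => by
    rw [← Submodule.map_le_iff_le_comap, Submodule.map_smul'']
    exact smul_mono_right _ le_top
  have heJ : J.map (e : V →ₗ[R] V') = J' := by
    rw [Submodule.map_smul'', Submodule.map_top, LinearEquiv.range]
  let ebar : (V ⧸ J) ≃ₗ[R] (V' ⧸ J') := Submodule.Quotient.equiv J J' e heJ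
  obtain ⟨f, hf⟩ := Module.projective_lifting_property α' (ξ.toLinearMap ∘ₗ α) hα'
  have hf : ∀ x, α' (f x) = ξ (α x) := fun x => LinearMap.congr_fun hf x
  let K : Submodule R (V' ⧸ J') := (LinearMap.ker α').map J'.mkQ
  obtain ⟨h, hhK, hbij⟩ := semisimple_correct ebar (J.mapQ J' f (le f)) K (by
    rw [eq_top_iff]
    rintro x -
    obtain ⟨v, rfl⟩ := Submodule.mkQ_surjective _ x
    obtain ⟨w, hw⟩ := hα (ξ.symm (α' v))
    have hk : v - f w ∈ LinearMap.ker α' := by simp [hf, hw]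
    have : J'.mkQ v = J'.mkQ (f w) + J'.mkQ (v - f w) := by simp
    rw [this]
    exact Submodule.add_mem_sup ⟨J.mkQ w, rfl⟩ ⟨_, hk, rfl⟩)
  let κ : LinearMap.ker α' →ₗ[R] K :=
    (J'.mkQ ∘ₗ (LinearMap.ker α').subtype).codRestrict K (fun x => ⟨x, x.2, rfl⟩)
  have hκ : Function.Surjective κ := by
    rintro ⟨_, x, hx, rfl⟩
    exact ⟨⟨x, hx⟩, rfl⟩
  obtain ⟨t, ht⟩ := Module.projective_lifting_property κ ((h.codRestrict K hhK) ∘ₗ J.mkQ) hκ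
  have ht : ∀ x, J'.mkQ (t x : V') = h (J.mkQ x) := fun x =>
    congrArg Subtype.val (LinearMap.congr_fun ht x)
  let g : V →ₗ[R] V' := f + (LinearMap.ker α').subtype ∘ₗ t
  have hg : ∀ x, g x = f x + t x := fun x => rfl
  have hgα : ∀ x, α' (g x) = ξ (α x) := fun x => by
    have : α' (t x : V') = 0 := (t x).2
    rw [hg, map_add, hf, this, add_zero]
  have hgbar : ∀ x, J'.mkQ (g x) = (J.mapQ J' f (le f) + h) (J.mkQ x) := fun x => by
    rw [hg, map_add, ht]; rfl
  have gsurj : Function.Surjective g := by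
    refine nakayama I hI g ?_
    rw [eq_top_iff]
    rintro v -
    obtain ⟨y, hy⟩ := hbij.2 (J'.mkQ v)
    obtain ⟨w, rfl⟩ := Submodule.mkQ_surjective _ y
    rw [← hgbar] at hy
    have : v - g w ∈ J' := by
      rw [← Submodule.Quotient.mk_eq_zero, Submodule.Quotient.mk_sub, sub_eq_zero]
      exact hy.symm
    have := Submodule.add_mem_sup (show g w ∈ LinearMap.range g from ⟨w, rfl⟩) this
    simpa using this
  obtain ⟨s, hs⟩ := g.exists_rightInverse_of_surjective (LinearMap.range_eq_top.mpr gsurj)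
  have hs : ∀ x, g (s x) = x := fun x => LinearMap.congr_fun hs x
  have ssurj : Function.Surjective s := by
    refine nakayama I hI s ?_
    rw [eq_top_iff]
    rintro v -
    have : v - s (g v) ∈ J := by
      rw [← Submodule.Quotient.mk_eq_zero, Submodule.Quotient.mk_sub, sub_eq_zero]
      apply hbij.1
      have h1 := hgbar v
      have h2 := hgbar (s (g v))
      rw [hs, h1] at h2
      exact h2
    have := Submodule.add_mem_sup (show s (g v) ∈ LinearMap.range s from ⟨g v, rfl⟩) this
    simpa using this
  have ginj : Function.Injective g := by
    intro x y hxy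
    obtain ⟨a, rfl⟩ := ssurj x
    obtain ⟨b, rfl⟩ := ssurj y
    rw [hs, hs] at hxy
    rw [hxy]
  exact ⟨LinearEquiv.ofBijective g ⟨ginj, gsurj⟩, fun x => (hgα x).symm⟩

/-- `1 - z` has a right inverse for `z` in the (left) Jacobson radical. -/
theorem right_inv {A : Type*} [Ring A] (z : A) (hz : z ∈ Ring.jacobson A) :
    ∃ s, (1 - z) * s = 1 := by
  obtain ⟨s, hs⟩ := Ideal.exists_mul_sub_mem_of_sub_one_mem_jacobson (I := (⊥ : Ideal A)) (1 - z)
    (by rw [Ideal.jacobson_bot]; simpa using hz)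
  have hs : s * (1 - z) = 1 := by simpa [sub_eq_zero] using hs
  obtain ⟨s', hs'⟩ := Ideal.exists_mul_sub_mem_of_sub_one_mem_jacobson (I := (⊥ : Ideal A)) s (by
    rw [Ideal.jacobson_bot]
    have : s - 1 = s * z := by rw [← hs]; noncomm_ring
    rw [this]
    exact Ideal.mul_mem_left _ _ hz)
  have hs' : s' * s = 1 := by simpa [sub_eq_zero] using hs'
  have : s' = 1 - z := left_inv_eq_right_inv hs' hs
  exact ⟨s, this ▸ hs'⟩

theorem exists_ideal {A : Type*} [Ring A]
    (hs : IsSemisimpleModule A (A ⧸ Ring.jacobson A)) :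
    ∃ I : Ideal Aᵐᵒᵖ, I ≤ Ring.jacobson Aᵐᵒᵖ ∧ IsSemisimpleModule Aᵐᵒᵖ (Aᵐᵒᵖ ⧸ I) := by
  let Q := A ⧸ Ring.jacobson A
  let mk : A →+* Q := Ideal.Quotient.mk (Ring.jacobson A)
  have : RingHomSurjective mk := ⟨Ideal.Quotient.mk_surjective⟩
  have hQ : IsSemisimpleRing Q := by
    let l : Q →ₛₗ[mk] Q := ⟨AddHom.id _, fun _ _ ↦ rfl⟩
    exact (l.isSemisimpleModule_iff_of_bijective Function.bijective_id).mp hs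
  let φ : Aᵐᵒᵖ →+* Qᵐᵒᵖ := RingHom.op mk
  have hφ : Function.Surjective φ := by
    intro x
    obtain ⟨a, ha⟩ := Ideal.Quotient.mk_surjective x.unop
    exact ⟨MulOpposite.op a, congrArg MulOpposite.op ha⟩
  have : RingHomSurjective φ := ⟨hφ⟩
  have hmem : ∀ x, x ∈ RingHom.ker φ ↔ x.unop ∈ Ring.jacobson A := fun x => by
    rw [RingHom.mem_ker, ← Ideal.Quotient.eq_zero_iff_mem, ← MulOpposite.op_eq_zero_iff (Ideal.Quotient.mk (Ring.jacobson A) x.unop)]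
    rfl
  refine ⟨RingHom.ker φ, ?_, ?_⟩
  · intro x hx
    rw [hmem] at hx
    rw [Ring.jacobson_eq_sInf_isMaximal, Ideal.mem_sInf]
    intro m hm
    by_contra hxm
    obtain ⟨r, y, hy, hr⟩ := hm.exists_inv hxm
    have hz : x.unop * r.unop ∈ Ring.jacobson A := Ideal.mul_mem_right _ _ hx
    obtain ⟨s, hs⟩ := right_inv _ hz
    apply hm.ne_top
    rw [Ideal.eq_top_iff_one]
    have : y = MulOpposite.op (1 - x.unop * r.unop) := by
      rw [eq_sub_of_add_eq' hr]; rfl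
    have h1 : MulOpposite.op s * y = 1 := by
      rw [this, ← MulOpposite.op_mul, hs]; rfl
    rw [← h1]
    exact Ideal.mul_mem_left _ _ hy
  · let l : (Aᵐᵒᵖ ⧸ RingHom.ker φ) →ₛₗ[φ] Qᵐᵒᵖ :=
      Submodule.liftQ (RingHom.ker φ) φ.toSemilinearMap (fun x hx => hx)
    refine (l.isSemisimpleModule_iff_of_bijective ⟨?_, ?_⟩).mpr inferInstance
    · rw [← LinearMap.ker_eq_bot]
      exact Submodule.ker_liftQ_eq_bot _ _ _ (fun x hx => hx)
    · intro x
      obtain ⟨a, rfl⟩ := hφ x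
      exact ⟨Submodule.Quotient.mk a, rfl⟩

end SemilocalLift



/-- **Lifting isomorphisms along surjections from projective modules over a semilocal ring.**
Let `A` be a semilocal ring (`A/Jac(A)` is semisimple), let `V ≅ V'` be finitely generated
projective right `A`-modules, let `α : V → U` and `α' : V' → U'` be surjective `A`-linear
maps, and let `ξ : U ≅ U'` be an isomorphism.  Then there is an isomorphism `ψ : V ≅ V'`
with `ξ ∘ α = α' ∘ ψ`. -/
theorem exists_iso_lifting_surjections_of_semilocal
    {A : Type*} [Ring A]
    (hsemilocal : IsSemisimpleModule A (A ⧸ Ideal.jacobson (⊥ : Ideal A)))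
    {V V' U U' : Type*}
    [AddCommGroup V] [AddCommGroup V'] [AddCommGroup U] [AddCommGroup U']
    [Module Aᵐᵒᵖ V] [Module Aᵐᵒᵖ V'] [Module Aᵐᵒᵖ U] [Module Aᵐᵒᵖ U']
    [Module.Finite Aᵐᵒᵖ V] [Module.Projective Aᵐᵒᵖ V]
    [Module.Finite Aᵐᵒᵖ V'] [Module.Projective Aᵐᵒᵖ V']
    (hVV' : Nonempty (V ≃ₗ[Aᵐᵒᵖ] V'))
    (α : V →ₗ[Aᵐᵒᵖ] U) (hα : Function.Surjective α)
    (α' : V' →ₗ[Aᵐᵒᵖ] U') (hα' : Function.Surjective α')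
    (ξ : U ≃ₗ[Aᵐᵒᵖ] U') :
    ∃ ψ : V ≃ₗ[Aᵐᵒᵖ] V', ∀ x : V, ξ (α x) = α' (ψ x) := by
  obtain ⟨e⟩ := hVV'
  rw [Ideal.jacobson_bot] at hsemilocal
  obtain ⟨I, hI, hss⟩ := SemilocalLift.exists_ideal hsemilocal
  exact SemilocalLift.main I hI e α hα α' hα' ξ
end
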